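/- Let t ≥ 3 and let a_1 > a_2 > ⋯ > a_t be positive integers such that the numbers 2^{a_1}+1, …, 2^{a_t}+1 are pairwise coprime. Then there exists a rational number x with odd denominator such that V(2; a_1, …, a_t; x) + V(−x) < 0. -/

import Mathlib

/-- `IsV2 V` says that `V : ℚ → ℚ` is the Kubert `V`-function in characteristic 2:
for any rational `x` (with odd denominator), any `k ≥ 1` and any integer `a` with
`0 ≤ a < 2^k - 1` such that `x - a/(2^k - 1)` is an integer, `V x` equals the
binary digit sum of `a` divided by `k`. -/
def IsV2 (V : ℚ → ℚ) : Prop :=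
  ∀ (x : ℚ) (k a : ℕ), 0 < k → a < 2 ^ k - 1 →
    (∃ z : ℤ, x - (a : ℚ) / ((2 : ℚ) ^ k - 1) = (z : ℚ)) →
    V x = ((Nat.digits 2 a).sum : ℚ) / (k : ℚ)

/-- `Vmulti V r x = V(2; r₁, …, r_t; x) = ∑_{S ⊆ {1,…,t}} (-1)^{t - |S|} V((∏_{j ∈ S} (2^{r_j}+1)) x)`. -/
def Vmulti (V : ℚ → ℚ) {t : ℕ} (r : Fin t → ℕ) (x : ℚ) : ℚ :=
  ∑ S : Finset (Fin t), (-1 : ℚ) ^ (t - S.card) * V ((∏ j ∈ S, ((2 : ℚ) ^ (r j) + 1)) * x)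

def ZZ (y : ℚ) : Prop := ∃ z : ℤ, y = (z : ℚ)

lemma ZZ.add {x y : ℚ} (hx : ZZ x) (hy : ZZ y) : ZZ (x + y) := by
  obtain ⟨a, rfl⟩ := hx; obtain ⟨b, rfl⟩ := hy; exact ⟨a + b, by push_cast; ring⟩
lemma ZZ.sub {x y : ℚ} (hx : ZZ x) (hy : ZZ y) : ZZ (x - y) := by
  obtain ⟨a, rfl⟩ := hx; obtain ⟨b, rfl⟩ := hy; exact ⟨a - b, by push_cast; ring⟩
lemma ZZ.mul {x y : ℚ} (hx : ZZ x) (hy : ZZ y) : ZZ (x * y) := by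
  obtain ⟨a, rfl⟩ := hx; obtain ⟨b, rfl⟩ := hy; exact ⟨a * b, by push_cast; ring⟩
lemma ZZ.int (z : ℤ) : ZZ (z : ℚ) := ⟨z, rfl⟩
lemma ZZ.nat (z : ℕ) : ZZ (z : ℚ) := ⟨z, by simp⟩
lemma ZZ.pow {x : ℚ} (hx : ZZ x) (n : ℕ) : ZZ (x ^ n) := by
  obtain ⟨a, rfl⟩ := hx; exact ⟨a ^ n, by push_cast; ring⟩
lemma ZZ.two_pow (n : ℕ) : ZZ (2 ^ n) := ⟨2 ^ n, by push_cast; ring⟩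
/-- if `n x` integer and `n ∣ m` then `m x` integer -/
lemma ZZ.of_dvd {n m : ℤ} {x : ℚ} (h : n ∣ m) (hx : ZZ ((n : ℚ) * x)) : ZZ ((m : ℚ) * x) := by
  obtain ⟨c, rfl⟩ := h
  have := (ZZ.int c).mul hx
  convert this using 1; push_cast; ring
/-- Bezout -/
lemma ZZ.of_coprime {n m : ℤ} {x : ℚ} (h : IsCoprime n m) (hx : ZZ ((n : ℚ) * x))
    (hy : ZZ ((m : ℚ) * x)) : ZZ x := by
  obtain ⟨a, b, hab⟩ := h
  have h1 := ((ZZ.int a).mul hx).add ((ZZ.int b).mul hy)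
  have : (a : ℚ) * n + b * m = 1 := by exact_mod_cast hab
  convert h1 using 1
  linear_combination (-x) * this

lemma fract_eq_zero_iff_ZZ (y : ℚ) : Int.fract y = 0 ↔ ZZ y := by
  rw [Int.fract_eq_zero_iff]
  constructor
  · rintro ⟨z, hz⟩; exact ⟨z, hz.symm⟩
  · rintro ⟨z, hz⟩; exact ⟨z, hz.symm⟩

def BB (y : ℚ) : ℚ := if Int.fract y = 0 then 0 else Int.fract y - 1 / 2

lemma BB_congr {y y' : ℚ} (h : ZZ (y - y')) : BB y = BB y' := by
  obtain ⟨z, hz⟩ := h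
  have : y = y' + z := by linarith
  subst this
  simp [BB]

lemma BB_neg (y : ℚ) : BB (-y) = - BB y := by
  unfold BB
  by_cases h : Int.fract y = 0
  · have : Int.fract (-y) = 0 := by rwa [Int.fract_neg_eq_zero]
    simp [h, this]
  · have h' : Int.fract (-y) ≠ 0 := by rwa [Ne, Int.fract_neg_eq_zero]
    rw [if_neg h, if_neg h', Int.fract_neg h]; ring

lemma BB_dist (M : ℕ) (hM : 0 < M) (c : ℕ) (hc : Nat.Coprime c M) (z : ℚ) :
    ∑ u ∈ Finset.range M, BB (z + c * u / M) = BB (M * z) := by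
  have hMq : (0 : ℚ) < M := by exact_mod_cast hM
  have hMi : (0 : ℤ) < M := by exact_mod_cast hM
  set n : ℤ := ⌊(M : ℚ) * z⌋ with hn
  set θ : ℚ := Int.fract ((M : ℚ) * z) with hθ
  have hz : (M : ℚ) * z = n + θ := (Int.floor_add_fract _).symm
  have hθ0 : 0 ≤ θ := Int.fract_nonneg _
  have hθ1 : θ < 1 := Int.fract_lt_one _
  let r : ℕ → ℕ := fun u => ((n + c * u) % M).toNat
  have hr : ∀ u, ((r u : ℕ) : ℤ) = (n + c * u) % M := fun u =>
    Int.toNat_of_nonneg (Int.emod_nonneg _ hMi.ne')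
  have hmaps : ∀ u ∈ Finset.range M, r u ∈ Finset.range M := by
    intro u _
    rw [Finset.mem_range]
    have := Int.emod_lt_of_pos (n + c * u) hMi
    rw [← hr] at this
    exact_mod_cast this
  have hinj : Set.InjOn r (Finset.range M : Finset ℕ) := by
    intro u hu w hw huw
    have h1 : (n + c * u) % M = (n + c * w) % (M : ℤ) := by rw [← hr, ← hr, huw]
    have h2 : (M : ℤ) ∣ (c : ℤ) * ((w : ℤ) - u) := by
      have := (Int.emod_emod_of_dvd _ (dvd_refl _) : _ % (M : ℤ) % M = (n + c * u) % M)
      have := Int.ModEq.dvd h1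
      convert this using 1; ring
    have h3 : IsCoprime (M : ℤ) (c : ℤ) := (Nat.isCoprime_iff_coprime.mpr hc).symm
    have h4 := h3.dvd_of_dvd_mul_left h2
    have h5 : (u : ℤ) % M = w % M := (Int.modEq_iff_dvd.mpr h4)
    have hu' : u < M := by simpa using hu
    have hw' : w < M := by simpa using hw
    have h6 : u % M = w % M := by exact_mod_cast h5
    rwa [Nat.mod_eq_of_lt hu', Nat.mod_eq_of_lt hw'] at h6
  have hsurj : Finset.image r (Finset.range M) = Finset.range M := by
    apply Finset.eq_of_subset_of_card_le
    · intro y hy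
      obtain ⟨u, hu, rfl⟩ := Finset.mem_image.mp hy
      exact hmaps u hu
    · rw [Finset.card_image_of_injOn hinj]
  have key : ∀ u : ℕ, BB (z + c * u / M) = BB (((r u : ℕ) + θ) / M) := by
    intro u
    apply BB_congr
    refine ⟨(n + c * u) / M, ?_⟩
    have h1 : (n + c * u : ℤ) = M * ((n + c * u) / M) + r u := by
      rw [hr]; exact (Int.mul_ediv_add_emod _ _).symm
    have h2 : (n + c * u : ℚ) = M * (((n + c * u) / M : ℤ) : ℚ) + r u := by exact_mod_cast h1
    have h3 : z = (n + θ) / M := by rw [← hz]; field_simp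
    rw [h3]
    field_simp
    linear_combination h2
  have hfr : ∀ s ∈ Finset.range M, Int.fract (((s : ℕ) + θ) / (M : ℚ)) = (s + θ) / M := by
    intro s hs
    rw [Int.fract_eq_self]
    have : s + 1 ≤ M := Finset.mem_range.mp hs
    have : (s : ℚ) + 1 ≤ M := by exact_mod_cast this
    refine ⟨by positivity, ?_⟩
    rw [div_lt_one hMq]; linarith
  have hsum : ∑ s ∈ Finset.range M, (s : ℚ) = M * (M - 1) / 2 := by
    clear * -
    induction M with
    | zero => simp
    | succ k ih => rw [Finset.sum_range_succ, ih]; push_cast; ring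
  have h1 : ∑ u ∈ Finset.range M, BB (z + c * u / M)
      = ∑ s ∈ Finset.range M, BB (((s : ℕ) + θ) / M) := by
    conv_rhs => rw [← hsurj]
    rw [Finset.sum_image hinj]
    exact Finset.sum_congr rfl fun u _ => key u
  rw [h1]
  have h2 : ∑ s ∈ Finset.range M, (((s : ℕ) + θ) / M - 1 / 2) = θ - 1 / 2 := by
    rw [Finset.sum_sub_distrib, ← Finset.sum_div, Finset.sum_add_distrib, hsum]
    simp
    field_simp
    ring
  unfold BB
  rw [← hθ]
  by_cases h0 : θ = 0
  · rw [if_pos h0]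
    obtain ⟨M', rfl⟩ : ∃ M', M = M' + 1 := ⟨M - 1, by omega⟩
    rw [Finset.sum_range_succ'] at h2 ⊢
    have : ∀ s ∈ Finset.range M', (if Int.fract ((((s + 1 : ℕ) : ℚ) + θ) / ((M' + 1 : ℕ) : ℚ)) = 0
        then 0 else Int.fract ((((s + 1 : ℕ) : ℚ) + θ) / ((M' + 1 : ℕ) : ℚ)) - 1 / 2)
        = (((s + 1 : ℕ) : ℚ) + θ) / ((M' + 1 : ℕ) : ℚ) - 1 / 2 := by
      intro s hs
      rw [hfr (s + 1) (by simpa using hs), if_neg]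
      positivity
    rw [Finset.sum_congr rfl this]
    simp only [h0] at h2 ⊢
    simp at h2 ⊢
    linarith
  · rw [if_neg h0, ← h2]
    refine Finset.sum_congr rfl fun s hs => ?_
    rw [hfr s hs, if_neg]
    have : 0 < θ := lt_of_le_of_ne hθ0 (Ne.symm h0)
    positivity

def gg (K : ℕ) (y : ℚ) : ℚ := (∑ i ∈ Finset.range K, BB (2 ^ i * y)) / K

lemma gg_congr (K : ℕ) {y y' : ℚ} (h : ZZ (y - y')) : gg K y = gg K y' := by
  unfold gg
  congr 1
  refine Finset.sum_congr rfl fun i _ => BB_congr ?_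
  rw [← mul_sub]
  exact (ZZ.two_pow i).mul h

lemma gg_neg (K : ℕ) (y : ℚ) : gg K (-y) = - gg K y := by
  unfold gg
  rw [← neg_div, ← Finset.sum_neg_distrib]
  congr 1
  refine Finset.sum_congr rfl fun i _ => ?_
  rw [← BB_neg]; ring_nf

lemma gg_two (K : ℕ) {y : ℚ} (h : ZZ ((2 ^ K - 1) * y)) : gg K (2 * y) = gg K y := by
  unfold gg
  congr 1
  have h1 := Finset.sum_range_succ (fun i => BB (2 ^ i * y)) K
  have h2 := Finset.sum_range_succ' (fun i => BB (2 ^ i * y)) K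
  have h3 : BB (2 ^ K * y) = BB (2 ^ 0 * y) := by
    apply BB_congr; convert h using 1; ring
  have h4 : ∑ i ∈ Finset.range K, BB (2 ^ i * (2 * y)) = ∑ i ∈ Finset.range K, BB (2 ^ (i + 1) * y) :=
    Finset.sum_congr rfl fun i _ => by ring_nf
  linarith

lemma gg_two_pow (K : ℕ) {y : ℚ} (h : ZZ ((2 ^ K - 1) * y)) (n : ℕ) :
    gg K (2 ^ n * y) = gg K y := by
  induction n with
  | zero => simp
  | succ n ih =>
    rw [← ih, ← gg_two K (y := 2 ^ n * y)]
    · ring_nf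
    · have := (ZZ.two_pow n).mul h
      convert this using 1; ring

lemma gg_dist (K M : ℕ) (hM : Odd M) (c : ℕ) (hc : Nat.Coprime c M) (z : ℚ) :
    ∑ u ∈ Finset.range M, gg K (z + c * u / M) = gg K (M * z) := by
  unfold gg
  rw [← Finset.sum_div, Finset.sum_comm]
  congr 1
  refine Finset.sum_congr rfl fun i _ => ?_
  have h2 : Nat.Coprime (2 ^ i * c) M :=
    Nat.Coprime.mul_left (Nat.Coprime.pow_left _ (Nat.coprime_two_left.mpr hM)) hc
  have := BB_dist M hM.pos (2 ^ i * c) h2 (2 ^ i * z)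
  rw [show (2 : ℚ) ^ i * (M * z) = M * (2 ^ i * z) by ring, ← this]
  refine Finset.sum_congr rfl fun u _ => ?_
  congr 1
  push_cast; ring

lemma gg_int (K : ℕ) {y : ℚ} (h : ZZ y) : gg K y = 0 := by
  have h1 : gg K y = gg K 0 := gg_congr K (by simpa using h)
  rw [h1]
  simp [gg, BB]

/-- digit sum formula -/
lemma fract_sum (K a : ℕ) (hK : 0 < K) (ha : a < 2 ^ K - 1) :
    ∑ i ∈ Finset.range K, Int.fract ((2 : ℚ) ^ i * ((a : ℚ) / (2 ^ K - 1)))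
      = ((Nat.digits 2 a).sum : ℚ) := by
  have h2K : 2 ≤ 2 ^ K := by calc 2 = 2 ^ 1 := rfl
    _ ≤ 2 ^ K := Nat.pow_le_pow_right (by norm_num) hK
  have hQ : (0 : ℚ) < 2 ^ K - 1 := by
    have : (2 : ℚ) ≤ 2 ^ K := by exact_mod_cast h2K
    linarith
  have hfl : ∀ i ∈ Finset.range K, Int.fract ((2 : ℚ) ^ i * ((a : ℚ) / (2 ^ K - 1)))
      = (2 : ℚ) ^ i * ((a : ℚ) / (2 ^ K - 1)) - ((a / 2 ^ (K - i) : ℕ) : ℚ) := by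
    intro i hi
    have hi' : i < K := Finset.mem_range.mp hi
    rw [Int.fract_eq_iff]
    set q := a / 2 ^ (K - i) with hq
    set r := a % 2 ^ (K - i) with hr
    have hKi : 2 ^ i * 2 ^ (K - i) = 2 ^ K := by rw [← pow_add]; congr 1; omega
    have har : a = 2 ^ (K - i) * q + r := (Nat.div_add_mod _ _).symm
    have hrl : r + 1 ≤ 2 ^ (K - i) := Nat.mod_lt _ (by positivity)
    have hql : q + 1 ≤ 2 ^ i := by
      apply Nat.div_lt_of_lt_mul
      rw [mul_comm, hKi]; omega
    have harq : (a : ℚ) = 2 ^ (K - i) * q + r := by exact_mod_cast har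
    have hKiq : (2 : ℚ) ^ i * 2 ^ (K - i) = 2 ^ K := by exact_mod_cast hKi
    have hqq : (q : ℚ) + 1 ≤ 2 ^ i := by exact_mod_cast hql
    have hrq : (r : ℚ) + 1 ≤ 2 ^ (K - i) := by exact_mod_cast hrl
    have heq : (2 : ℚ) ^ i * ((a : ℚ) / (2 ^ K - 1)) - (q : ℚ) = (q + 2 ^ i * r) / (2 ^ K - 1) := by
      rw [eq_div_iff hQ.ne']
      field_simp
      rw [harq]
      linear_combination (q : ℚ) * hKiq
    have hpi : (1 : ℚ) ≤ 2 ^ i := one_le_pow₀ (by norm_num)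
    refine ⟨?_, ?_, q, by push_cast; ring⟩
    · rw [heq]; positivity
    · rw [heq, div_lt_one hQ]
      have haq : (a : ℚ) + 2 ≤ 2 ^ K := by
        have : a + 2 ≤ 2 ^ K := by omega
        exact_mod_cast this
      by_cases hc : r + 1 = 2 ^ (K - i)
      · have hcq : (r : ℚ) + 1 = 2 ^ (K - i) := by exact_mod_cast hc
        have hne : q + 1 ≠ 2 ^ i := by
          intro h
          have : a + 1 = 2 ^ K := by
            rw [har, ← hKi, ← h, ← hc]; ring
          omega
        have hq2 : q + 2 ≤ 2 ^ i := by omega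
        have hq2q : (q : ℚ) + 2 ≤ 2 ^ i := by exact_mod_cast hq2
        rw [← hKiq, ← hcq]; nlinarith
      · have : r + 2 ≤ 2 ^ (K - i) := by omega
        have : (r : ℚ) + 2 ≤ 2 ^ (K - i) := by exact_mod_cast this
        rw [← hKiq]; nlinarith
  rw [Finset.sum_congr rfl hfl, Finset.sum_sub_distrib, ← Finset.sum_mul]
  have hgeo : ∑ i ∈ Finset.range K, (2 : ℚ) ^ i = 2 ^ K - 1 := by
    rw [geom_sum_eq (by norm_num)]; norm_num
  rw [hgeo, mul_div_cancel₀ _ hQ.ne']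
  have hleg := Nat.sub_one_mul_sum_log_div_pow_eq_sub_sum_digits (p := 2) a
  rw [show 2 - 1 = 1 from rfl, one_mul] at hleg
  have hrefl : ∑ i ∈ Finset.range K, ((a / 2 ^ (K - i) : ℕ) : ℚ)
      = ∑ i ∈ Finset.range K, ((a / 2 ^ (i + 1) : ℕ) : ℚ) := by
    rw [← Finset.sum_range_reflect]
    refine Finset.sum_congr rfl fun j hj => ?_
    have := Finset.mem_range.mp hj
    congr 3; omega
  have hext : ∑ i ∈ Finset.range K, a / 2 ^ (i + 1)
      = ∑ i ∈ Finset.range (Nat.log 2 a).succ, a / 2 ^ (i + 1) := by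
    symm
    rcases Nat.eq_zero_or_pos a with h0 | hapos
    · subst h0; simp
    have hlog : Nat.log 2 a < K := Nat.log_lt_of_lt_pow (by omega) (by omega)
    apply Finset.sum_subset
    · intro i hi
      simp only [Finset.mem_range] at hi ⊢
      omega
    · intro i _ hi2
      simp only [Finset.mem_range, not_lt] at hi2
      apply Nat.div_eq_of_lt
      exact Nat.lt_pow_of_log_lt (by norm_num) (by omega)
  have hle : (Nat.digits 2 a).sum ≤ a := Nat.digit_sum_le 2 a
  rw [hrefl]
  have : ∑ i ∈ Finset.range K, a / 2 ^ (i + 1) + (Nat.digits 2 a).sum = a := by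
    rw [hext]
    simp only [Nat.succ_eq_add_one] at hleg ⊢
    rw [hleg]; omega
  have hq : ((∑ i ∈ Finset.range K, a / 2 ^ (i + 1) : ℕ) : ℚ) + ((Nat.digits 2 a).sum : ℕ) = a := by
    exact_mod_cast this
  rw [Nat.cast_sum] at hq
  linarith

lemma V_eq (V : ℚ → ℚ) (hV : IsV2 V) (K : ℕ) (hK : 0 < K) (y : ℚ) (h : ZZ ((2 ^ K - 1) * y))
    (hy : ¬ ZZ y) : V y = gg K y + 1 / 2 := by
  have h2K : 2 ≤ 2 ^ K := by calc 2 = 2 ^ 1 := rfl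
    _ ≤ 2 ^ K := Nat.pow_le_pow_right (by norm_num) hK
  have h2Kq : (2 : ℚ) ≤ 2 ^ K := by exact_mod_cast h2K
  have hQ : (0 : ℚ) < 2 ^ K - 1 := by linarith
  have hf : ZZ ((2 ^ K - 1) * Int.fract y) := by
    have h1 : ZZ ((2 ^ K - 1 : ℚ) * (⌊y⌋ : ℚ)) :=
      ((ZZ.two_pow K).sub ⟨1, by simp⟩).mul (ZZ.int _)
    convert h.sub h1 using 1
    unfold Int.fract; ring
  obtain ⟨z, hz⟩ := hf
  have hf0 := Int.fract_nonneg y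
  have hf1 := Int.fract_lt_one y
  have hz0 : 0 ≤ z := by
    have : (0 : ℚ) ≤ z := by rw [← hz]; positivity
    exact_mod_cast this
  obtain ⟨a, rfl⟩ := Int.eq_ofNat_of_zero_le hz0
  push_cast at hz
  have ha : a < 2 ^ K - 1 := by
    have : (a : ℚ) < 2 ^ K - 1 := by rw [← hz]; nlinarith
    have h3 : ((a + 1 : ℕ) : ℚ) < (2 ^ K : ℕ) := by push_cast; linarith
    have : a + 1 < 2 ^ K := by exact_mod_cast h3
    omega
  have hfa : (a : ℚ) / (2 ^ K - 1) = Int.fract y := by rw [← hz]; field_simp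
  rw [hV y K a hK ha ⟨⌊y⌋, by rw [hfa]; unfold Int.fract; ring⟩, ← fract_sum K a hK ha, hfa]
  have hKq : (K : ℚ) ≠ 0 := by positivity
  unfold gg
  rw [div_add' _ _ _ hKq]
  congr 1
  have : ∀ i ∈ Finset.range K, Int.fract ((2 : ℚ) ^ i * Int.fract y) = BB (2 ^ i * y) + 1 / 2 := by
    intro i _
    have e1 : Int.fract ((2 : ℚ) ^ i * Int.fract y) = Int.fract (2 ^ i * y) := by
      rw [Int.fract_eq_fract]
      refine ⟨- (2 ^ i * ⌊y⌋), ?_⟩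
      unfold Int.fract; push_cast; ring
    rw [e1]
    unfold BB
    rw [if_neg]; · ring
    rw [fract_eq_zero_iff_ZZ]
    intro hh
    apply hy
    refine ZZ.of_coprime (n := 2 ^ i) (m := 2 ^ K - 1) ?_ (by push_cast; exact hh)
      (by push_cast; exact h)
    apply IsCoprime.pow_left
    refine ⟨2 ^ (K - 1), -1, ?_⟩
    obtain ⟨k, rfl⟩ : ∃ k, K = k + 1 := ⟨K - 1, by omega⟩
    simp only [Nat.add_sub_cancel]; ring
  rw [Finset.sum_congr rfl this, Finset.sum_add_distrib]
  simp
  ring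

set_option linter.unusedSectionVars false

section Combi
variable {ι : Type} [DecidableEq ι] 

def GG (K : ℕ) (P : ι → ℕ) (T : Finset ι) (x : ℚ) : ℚ :=
  ∑ S ∈ T.powerset, (-1 : ℚ) ^ (T.card + S.card) * gg K ((∏ j ∈ S, (P j : ℚ)) * x)

lemma GG_congr (K : ℕ) (P : ι → ℕ) (T : Finset ι) {x y : ℚ} (h : ZZ (x - y)) :
    GG K P T x = GG K P T y := by
  unfold GG
  refine Finset.sum_congr rfl fun S _ => ?_
  congr 1
  apply gg_congr
  rw [← mul_sub]
  refine ZZ.mul ?_ h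
  exact ⟨∏ j ∈ S, (P j : ℤ), by push_cast; rfl⟩

lemma GG_insert (K : ℕ) (P : ι → ℕ) (T : Finset ι) (m : ι) (hm : m ∉ T) (x : ℚ) :
    GG K P (insert m T) x = GG K P T (P m * x) - GG K P T x := by
  unfold GG
  rw [Finset.sum_powerset_insert hm, Finset.card_insert_of_notMem hm, add_comm, sub_eq_add_neg,
    ← Finset.sum_neg_distrib]
  congr 1
  · refine Finset.sum_congr rfl fun S hS => ?_
    have hmS : m ∉ S := fun h => hm (Finset.mem_powerset.mp hS h)
    rw [Finset.card_insert_of_notMem hmS, Finset.prod_insert hmS]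
    congr 1
    · ring
    · congr 1; ring
  · refine Finset.sum_congr rfl fun S hS => ?_
    ring

def Good (P d : ι → ℕ) (T : Finset ι) (x : ℚ) : Prop :=
  ZZ ((∏ i ∈ T, (d i : ℚ)) * x) ∧ ∀ i ∈ T, ¬ ZZ ((∏ j ∈ T.erase i, (P j : ℚ)) * x)

structure Setup (K : ℕ) (P d v : ι → ℕ) : Prop where
  dP : ∀ i, d i ∣ P i
  cop : ∀ i j, i ≠ j → Nat.Coprime (P i) (P j)
  one_lt : ∀ i, 1 < d i
  odd : ∀ i, Odd (d i)
  lowP : ∀ i m, v i < v m → (d i : ℤ) ∣ (P m : ℤ) - 2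
  lowd : ∀ i m, v i < v m → (d i : ℤ) ∣ (d m : ℤ) - 2
  per : ∀ i, (d i : ℤ) ∣ 2 ^ K - 1
  Kpos : 0 < K

variable {K : ℕ} {P d v : ι → ℕ}

lemma Setup.dcop (h : Setup K P d v) (i j : ι) (hij : i ≠ j) : IsCoprime (d i : ℤ) (d j : ℤ) :=
  Nat.isCoprime_iff_coprime.mpr
    (Nat.Coprime.coprime_dvd_left (h.dP i) (Nat.Coprime.coprime_dvd_right (h.dP j) (h.cop i j hij)))

lemma Setup.prod_dvd (h : Setup K P d v) (T : Finset ι) (z : ℤ) (hz : ∀ i ∈ T, (d i : ℤ) ∣ z) :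
    (∏ i ∈ T, (d i : ℤ)) ∣ z :=
  Finset.prod_dvd_of_coprime (fun i _ j _ hij => h.dcop i j hij) hz

lemma Setup.ZZ_of (h : Setup K P d v) (T : Finset ι) (z : ℤ) (hz : ∀ i ∈ T, (d i : ℤ) ∣ z)
    {x : ℚ} (hx : ZZ ((∏ i ∈ T, (d i : ℚ)) * x)) : ZZ ((z : ℚ) * x) := by
  apply ZZ.of_dvd (h.prod_dvd T z hz)
  push_cast; exact hx

lemma Setup.ZZ_per (h : Setup K P d v) (T : Finset ι)
    {x : ℚ} (hx : ZZ ((∏ i ∈ T, (d i : ℚ)) * x)) : ZZ ((2 ^ K - 1) * x) := by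
  have := h.ZZ_of T (2 ^ K - 1) (fun i _ => h.per i) hx
  push_cast at this; exact this

lemma ZZ_prod (P : ι → ℕ) (S : Finset ι) : ZZ (∏ j ∈ S, (P j : ℚ)) :=
  ⟨∏ j ∈ S, (P j : ℤ), by push_cast; rfl⟩

lemma GG_two (h : Setup K P d v) (T : Finset ι) {x : ℚ} (hx : ZZ ((∏ i ∈ T, (d i : ℚ)) * x)) :
    GG K P T (2 * x) = GG K P T x := by
  unfold GG
  refine Finset.sum_congr rfl fun S _ => ?_
  congr 1
  rw [← gg_two K (y := (∏ j ∈ S, (P j : ℚ)) * x)]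
  · ring_nf
  · convert (ZZ_prod P S).mul (h.ZZ_per T hx) using 1; ring

lemma Setup.prod_cop (h : Setup K P d v) (S : Finset ι) (m : ι) (hm : m ∉ S) :
    Nat.Coprime (∏ j ∈ S, P j) (d m) := by
  apply Nat.Coprime.prod_left
  intro j hj
  exact Nat.Coprime.coprime_dvd_right (h.dP m) (h.cop j m (fun e => hm (e ▸ hj)))

lemma GG_dist (h : Setup K P d v) (T : Finset ι) (m : ι) (hm : m ∉ T)
    (hv : ∀ i ∈ T, v i < v m) {x : ℚ} (hx : ZZ ((∏ i ∈ T, (d i : ℚ)) * x)) :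
    ∑ u ∈ Finset.range (d m), GG K P T (x + u / d m) = GG K P T x := by
  rw [← GG_two h T hx]
  have h2 : GG K P T (2 * x) = GG K P T (d m * x) := by
    apply GG_congr
    have := h.ZZ_of T (2 - d m) (fun i hi => by
      rw [← neg_sub]; exact (dvd_neg.mpr (h.lowd i m (hv i hi)))) hx
    convert this using 1; push_cast; ring
  rw [h2]
  unfold GG
  rw [Finset.sum_comm]
  refine Finset.sum_congr rfl fun S hS => ?_
  rw [← Finset.mul_sum]
  congr 1
  have hmS : m ∉ S := fun hh => hm (Finset.mem_powerset.mp hS hh)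
  have := gg_dist K (d m) (h.odd m) (∏ j ∈ S, P j) (h.prod_cop S m hmS) ((∏ j ∈ S, (P j : ℚ)) * x)
  rw [show (∏ j ∈ S, (P j : ℚ)) * (d m * x) = d m * ((∏ j ∈ S, (P j : ℚ)) * x) by ring, ← this]
  refine Finset.sum_congr rfl fun u _ => ?_
  congr 1
  push_cast; ring

lemma g_dist0 (h : Setup K P d v) (T : Finset ι) (m : ι)
    (hv : ∀ i ∈ T, v i < v m) {x : ℚ} (hx : ZZ ((∏ i ∈ T, (d i : ℚ)) * x)) :
    ∑ u ∈ Finset.range (d m), gg K (x + u / d m) = gg K x := by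
  have := gg_dist K (d m) (h.odd m) 1 (Nat.coprime_one_left _) x
  simp only [Nat.cast_one, one_mul] at this
  rw [this, ← gg_two K (h.ZZ_per T hx)]
  apply gg_congr
  have := h.ZZ_of T (d m - 2) (fun i hi => h.lowd i m (hv i hi)) hx
  convert this using 1; push_cast; ring

lemma good_step (h : Setup K P d v) (T : Finset ι) (m : ι) (hm : m ∉ T)
    (hv : ∀ i ∈ T, v i < v m) {x : ℚ} (hx : Good P d T x) (u : ℕ) (hu0 : 0 < u) (hu : u < d m) :
    Good P d (insert m T) (x + u / d m) := by
  have hd0 : (d m : ℚ) ≠ 0 := by have := h.one_lt m; positivity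
  constructor
  · rw [Finset.prod_insert hm]
    have h1 := (ZZ.nat (d m)).mul hx.1
    have h2 := (ZZ_prod d T).mul (ZZ.nat u)
    convert h1.add h2 using 1
    field_simp
  · intro i hi
    rcases Finset.mem_insert.mp hi with rfl | hiT
    · rw [Finset.erase_insert hm]
      intro hz
      have hPx : ZZ ((∏ j ∈ T, (P j : ℚ)) * x) := by
        have := ZZ.of_dvd (n := ∏ j ∈ T, (d j : ℤ)) (m := ∏ j ∈ T, (P j : ℤ)) (x := x)
          (Finset.prod_dvd_prod_of_dvd _ _ fun j _ => by exact_mod_cast h.dP j)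
          (by push_cast; exact hx.1)
        push_cast at this; exact this
      have h1 : ZZ ((∏ j ∈ T, (P j : ℚ)) * ((u : ℚ) / d i)) := by
        convert hz.sub hPx using 1; ring
      have h2 : ZZ ((u : ℚ) / d i) := by
        refine ZZ.of_coprime (n := ((∏ j ∈ T, P j : ℕ) : ℤ)) (m := (d i : ℤ))
          (Nat.isCoprime_iff_coprime.mpr (h.prod_cop T i hm)) ?_ ?_
        · push_cast; exact h1
        · refine ⟨u, ?_⟩
          push_cast; field_simp
      obtain ⟨z, hz⟩ := h2
      have hd : (0 : ℚ) < d i := lt_of_le_of_ne (by positivity) (Ne.symm hd0)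
      have hzp : (0 : ℚ) < z := by rw [← hz]; positivity
      have hzl : (z : ℚ) < 1 := by
        rw [← hz, div_lt_one hd]; exact_mod_cast hu
      have a1 : (0 : ℤ) < z := by exact_mod_cast hzp
      have a2 : z < 1 := by exact_mod_cast hzl
      omega
    · have him : i ≠ m := fun e => hm (e ▸ hiT)
      rw [Finset.erase_insert_of_ne him.symm]
      rw [Finset.prod_insert (fun hh => hm (Finset.mem_of_mem_erase hh))]
      intro hz
      apply hx.2 i hiT
      obtain ⟨c, hc⟩ := h.dP m
      have hcq : (P m : ℚ) = d m * c := by exact_mod_cast hc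
      have h1 : ZZ ((P m : ℚ) * ((u : ℚ) / d m)) := ⟨c * u, by rw [hcq]; push_cast; field_simp⟩
      have h2 : ZZ (((P m - 2 : ℤ) : ℚ) * x) := h.ZZ_of T _ (fun i hi => h.lowP i m (hv i hi)) hx.1
      have hA := ZZ_prod P (T.erase i)
      refine ZZ.of_coprime (n := 2) (m := 2 ^ K - 1) (by
        have hK := h.Kpos
        refine ⟨2 ^ (K - 1), -1, ?_⟩
        obtain ⟨k, rfl⟩ : ∃ k, K = k + 1 := ⟨K - 1, by omega⟩
        simp only [Nat.add_sub_cancel]; ring) ?_ ?_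
      · have := (hz.sub (hA.mul h1)).sub (hA.mul h2)
        convert this using 1; push_cast; ring
      · have := hA.mul (h.ZZ_per T hx.1)
        convert this using 1; push_cast; ring

lemma step (h : Setup K P d v) (T : Finset ι) (m : ι) (hm : m ∉ T)
    (hv : ∀ i ∈ T, v i < v m) {x : ℚ} (hx : Good P d T x) (hneg : GG K P T x < 0) (c : ℚ) :
    ∃ x', Good P d (insert m T) x' ∧ GG K P (insert m T) x' - c * gg K x' < 0 := by
  have hd0 : (d m : ℚ) ≠ 0 := by have := h.one_lt m; positivity
  by_contra hcon
  push Not at hcon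
  obtain ⟨D, hD⟩ : ∃ D, d m = D + 1 := ⟨d m - 1, by have := h.one_lt m; omega⟩
  have hge : 0 ≤ ∑ u ∈ Finset.range D, (GG K P (insert m T) (x + ((u + 1 : ℕ) : ℚ) / d m)
      - c * gg K (x + ((u + 1 : ℕ) : ℚ) / d m)) := by
    apply Finset.sum_nonneg
    intro u hu
    apply hcon
    have := Finset.mem_range.mp hu
    exact good_step h T m hm hv hx (u + 1) (by omega) (by omega)
  have h1 := GG_dist h T m hm hv hx.1
  have h2 := g_dist0 h T m hv hx.1
  have hr : Finset.range (d m) = Finset.range (D + 1) := by rw [hD]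
  rw [hr, Finset.sum_range_succ'] at h1 h2
  have e0 : x + ((0 : ℕ) : ℚ) / d m = x := by simp
  rw [e0] at h1 h2
  have hP : ∀ u : ℕ, GG K P T (P m * (x + (u : ℚ) / d m)) = GG K P T x := by
    intro u
    rw [← GG_two h T hx.1]
    apply GG_congr
    obtain ⟨c, hc⟩ := h.dP m
    have hcq : (P m : ℚ) = d m * c := by exact_mod_cast hc
    have h1 : ZZ ((P m : ℚ) * ((u : ℚ) / d m)) := ⟨c * u, by rw [hcq]; push_cast; field_simp⟩
    have h2 : ZZ (((P m - 2 : ℤ) : ℚ) * x) := h.ZZ_of T _ (fun i hi => h.lowP i m (hv i hi)) hx.1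
    convert h1.add h2 using 1
    push_cast; ring
  have h3 : ∑ u ∈ Finset.range D, (GG K P (insert m T) (x + ((u + 1 : ℕ) : ℚ) / d m)
      - c * gg K (x + ((u + 1 : ℕ) : ℚ) / d m)) = D * GG K P T x := by
    rw [Finset.sum_sub_distrib, ← Finset.mul_sum]
    simp_rw [GG_insert K P T m hm, hP]
    rw [Finset.sum_sub_distrib]
    simp only [Finset.sum_const, Finset.card_range, nsmul_eq_mul]
    have h1' : ∑ u ∈ Finset.range D, GG K P T (x + ((u + 1 : ℕ) : ℚ) / d m) = 0 := by linarith
    have h2' : ∑ u ∈ Finset.range D, gg K (x + ((u + 1 : ℕ) : ℚ) / d m) = 0 := by linarith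
    rw [h1', h2']; ring
  rw [h3] at hge
  have hDp : (0 : ℚ) < D := by
    have := h.one_lt m
    have : 0 < D := by omega
    exact_mod_cast this
  nlinarith

end Combi

lemma digit_sum_le_of_lt (m n : ℕ) (h : n < 2 ^ m) : (Nat.digits 2 n).sum ≤ m := by
  have h1 : (Nat.digits 2 n).length ≤ m := by
    rw [Nat.digits_length_le_iff (by norm_num)]; exact h
  have h2 : (Nat.digits 2 n).sum ≤ (Nat.digits 2 n).length • 1 := by
    apply List.sum_le_card_nsmul
    intro x hx
    have := Nat.digits_lt_base (b := 2) (by norm_num) hx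
    omega
  simp at h2
  omega

lemma pow_low {v w n : ℕ} (h : v < w) (hn : 2 ^ w ∣ n) :
    ((2 ^ (2 ^ v) + 1 : ℕ) : ℤ) ∣ 2 ^ n - 1 := by
  have h1 : 2 ^ v * 2 ∣ n := by
    rw [← pow_succ]; exact (pow_dvd_pow 2 h).trans hn
  obtain ⟨c, rfl⟩ := h1
  have h2 : (2 : ℤ) ^ (2 ^ v * 2) - 1 ∣ 2 ^ (2 ^ v * 2 * c) - 1 := by
    rw [pow_mul _ _ c]; exact sub_one_dvd_pow_sub_one _ _
  refine dvd_trans ⟨2 ^ (2 ^ v) - 1, ?_⟩ h2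
  push_cast; ring

lemma V_low (V : ℚ → ℚ) (hV : IsV2 V) (v w : ℕ) (h : v < w) :
    V (1 / (((2 ^ (2 ^ v) + 1 : ℕ) : ℚ) * ((2 ^ (2 ^ w) + 1 : ℕ) : ℚ))) < 1 / 2 := by
  set b := 2 ^ w with hb
  have hb0 : 0 < b := by positivity
  have hd : (2 ^ (2 ^ v) + 1) ∣ 2 ^ b - 1 := by
    have := pow_low h (dvd_refl (2 ^ w))
    have h1 : ((2 ^ b - 1 : ℕ) : ℤ) = 2 ^ b - 1 := by
      rw [Nat.cast_sub Nat.one_le_two_pow]; push_cast; rfl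
    rw [← hb, ← h1] at this
    exact_mod_cast this
  obtain ⟨E, hE⟩ := hd
  set D := 2 ^ (2 ^ v) + 1 with hD
  have hD3 : 3 ≤ D := by
    have : 2 ^ 1 ≤ 2 ^ (2 ^ v) := Nat.pow_le_pow_right (by norm_num) Nat.one_le_two_pow
    omega
  have hb1 : 1 ≤ 2 ^ b := Nat.one_le_two_pow
  obtain ⟨c, hc⟩ : ∃ c, b = c + 1 := ⟨b - 1, by omega⟩
  have hEl : E < 2 ^ c := by
    have h1 : D * E < 2 * 2 ^ c := by rw [← hE, hc, pow_succ]; have := Nat.one_le_two_pow (n := c); omega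
    nlinarith
  have hEq : (D : ℚ) * E = 2 ^ b - 1 := by
    have : D * E + 1 = 2 ^ b := by omega
    have : (D : ℚ) * E + 1 = 2 ^ b := by exact_mod_cast this
    linarith
  have hDq : (D : ℚ) ≠ 0 := by positivity
  have h2b : (2 : ℚ) ≤ 2 ^ b := by
    calc (2 : ℚ) = 2 ^ 1 := by norm_num
      _ ≤ 2 ^ b := pow_le_pow_right₀ (by norm_num) hb0
  have hval : V (1 / ((D : ℚ) * ((2 ^ b + 1 : ℕ) : ℚ))) = ((Nat.digits 2 E).sum : ℚ) / ((2 * b : ℕ) : ℚ) := by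
    apply hV _ (2 * b) E (by omega)
    · have h3 : 2 ^ c < 2 ^ b := Nat.pow_lt_pow_right (by norm_num) (by omega)
      have h4 : 2 ^ b ≤ 2 ^ (2 * b) := Nat.pow_le_pow_right (by norm_num) (by omega)
      omega
    · refine ⟨0, ?_⟩
      have e1 : (2 : ℚ) ^ (2 * b) - 1 = (D * E) * (2 ^ b + 1) := by rw [hEq]; ring
      have hE0 : (E : ℚ) ≠ 0 := by
        intro h0; rw [h0] at hEq; linarith
      rw [e1]; push_cast
      have : (2 : ℚ) ^ b + 1 ≠ 0 := by positivity
      field_simp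
      simp
  rw [hval, div_lt_iff₀ (by positivity)]
  have := digit_sum_le_of_lt c E hEl
  have h5 : (Nat.digits 2 E).sum < b := by omega
  have h6 : ((Nat.digits 2 E).sum : ℚ) < b := by exact_mod_cast h5
  rw [Nat.cast_mul]; push_cast [-Nat.cast_list_sum]; linarith

lemma base {ι : Type} [DecidableEq ι] (V : ℚ → ℚ) (hV : IsV2 V) {K : ℕ} {a v : ι → ℕ}
    (h : Setup K (fun i => 2 ^ a i + 1) (fun i => 2 ^ (2 ^ v i) + 1) v)
    (i j : ι) (hv : v i < v j) :
    ∃ x, Good (fun i => 2 ^ a i + 1) (fun i => 2 ^ (2 ^ v i) + 1) {i, j} x ∧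
      GG K (fun i => 2 ^ a i + 1) {i, j} x < 0 := by
  have hij : i ≠ j := fun e => by subst e; omega
  set P : ι → ℕ := (fun i => 2 ^ a i + 1) with hP
  set d : ι → ℕ := (fun i => 2 ^ (2 ^ v i) + 1) with hd
  have hdi : (d i : ℚ) ≠ 0 := by simp only [hd]; positivity
  have hdj : (d j : ℚ) ≠ 0 := by simp only [hd]; positivity
  set x : ℚ := 1 / ((d i : ℚ) * (d j : ℚ)) with hx
  have hNx : ZZ ((∏ k ∈ ({i, j} : Finset ι), (d k : ℚ)) * x) := by
    rw [Finset.prod_pair hij]; exact ⟨1, by rw [hx]; push_cast; field_simp⟩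
  have hper := h.ZZ_per _ hNx
  have hnot : ∀ k l : ι, k ≠ l → ¬ ZZ ((P k : ℚ) * (1 / ((d k : ℚ) * (d l : ℚ)))) := by
    intro k l hkl ⟨z, hz⟩
    have hdk : (d k : ℚ) ≠ 0 := by simp only [hd]; positivity
    have hdl : (d l : ℚ) ≠ 0 := by simp only [hd]; positivity
    have h1 : (P k : ℚ) = z * (d k * d l) := by
      rw [← hz]; field_simp
    have h2 : (P k : ℤ) = z * (d k * d l) := by exact_mod_cast h1
    have h3 : (d l : ℤ) ∣ P k := ⟨z * d k, by rw [h2]; ring⟩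
    have h4 : d l ∣ P k := by exact_mod_cast h3
    have h5 := Nat.dvd_gcd h4 (h.dP l)
    rw [h.cop k l hkl] at h5
    have := h.one_lt l
    have := Nat.le_of_dvd one_pos h5
    omega
  have hgood : Good P d {i, j} x := by
    refine ⟨hNx, ?_⟩
    intro k hk
    rcases Finset.mem_insert.mp hk with rfl | hk
    · rw [Finset.erase_insert (by simpa using hij), Finset.prod_singleton]
      have := hnot j k hij.symm
      rwa [mul_comm (d j : ℚ)] at this
    · rw [Finset.mem_singleton] at hk; subst hk
      rw [Finset.pair_comm, Finset.erase_insert (by simpa using hij.symm), Finset.prod_singleton]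
      exact hnot i k hij
  refine ⟨x, hgood, ?_⟩
  have hemp : ∀ y, GG K P ∅ y = gg K y := by intro y; simp [GG]
  have hsing : ∀ y, GG K P {j} y = gg K (P j * y) - gg K y := by
    intro y
    have := GG_insert K P ∅ j (by simp) y
    simpa [hemp] using this
  rw [GG_insert K P {j} i (by simpa using hij), hsing, hsing]
  have hzero : ∀ (k : ι) (y : ℚ), ZZ ((2 ^ K - 1) * y) → ZZ ((P k : ℚ) * y) → gg K y = 0 := by
    intro k y hy hk
    have h1 := gg_two_pow K hy (a k)
    have h2 : gg K (2 ^ (a k) * y) = gg K (- y) := by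
      apply gg_congr
      convert hk using 1
      simp only [hP]; push_cast; ring
    rw [gg_neg] at h2
    linarith
  obtain ⟨ci, hci⟩ := h.dP i
  obtain ⟨cj, hcj⟩ := h.dP j
  have hciq : (P i : ℚ) = d i * ci := by exact_mod_cast hci
  have hcjq : (P j : ℚ) = d j * cj := by exact_mod_cast hcj
  have hall : ZZ ((P j : ℚ) * (P i * x)) :=
    ⟨ci * cj, by rw [hciq, hcjq, hx]; push_cast; field_simp⟩
  have hperP : ∀ k, ZZ ((2 ^ K - 1) * ((P k : ℚ) * x)) := by
    intro k
    convert (ZZ.nat (P k)).mul hper using 1; ring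
  rw [gg_int K hall, hzero j _ (hperP i) hall,
    hzero i ((P j : ℚ) * x) (hperP j) (by convert hall using 1; ring)]
  have hxn : ¬ ZZ x := by
    intro hh
    apply hnot i j hij
    exact (ZZ.nat (P i)).mul hh
  have h1 := V_eq V hV K h.Kpos x hper hxn
  have h2 := V_low V hV (v i) (v j) hv
  have h3 : V x < 1 / 2 := h2
  linarith

lemma exists_neg {ι : Type} [DecidableEq ι] (V : ℚ → ℚ) (hV : IsV2 V) {K : ℕ} {a v : ι → ℕ}
    (h : Setup K (fun i => 2 ^ a i + 1) (fun i => 2 ^ (2 ^ v i) + 1) v)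
    (hinj : Function.Injective v) (T : Finset ι) :
    2 ≤ T.card → 
    ∃ x, Good (fun i => 2 ^ a i + 1) (fun i => 2 ^ (2 ^ v i) + 1) T x ∧
      GG K (fun i => 2 ^ a i + 1) T x < 0 := by
  induction T using Finset.induction_on_max_value v with
  | empty => simp
  | insert m T hm hle ih =>
    intro hcard
    have hlt : ∀ i ∈ T, v i < v m := fun i hi =>
      lt_of_le_of_ne (hle i hi) (fun e => hm (hinj e ▸ hi))
    rw [Finset.card_insert_of_notMem hm] at hcard
    by_cases h2 : 2 ≤ T.card
    · obtain ⟨x, hx, hneg⟩ := ih h2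
      obtain ⟨x', hx', hn'⟩ := step h T m hm hlt hx hneg 0
      exact ⟨x', hx', by simpa using hn'⟩
    · obtain ⟨i, rfl⟩ := Finset.card_eq_one.mp (show T.card = 1 by omega)
      have := base V hV h i m (hlt i (by simp))
      rwa [Finset.pair_comm] at this

/-- For `t ≥ 3` and positive integers `a₁ > a₂ > ⋯ > a_t` with `2^{a_j}+1` pairwise coprime,
there is a rational `x` with odd denominator such that `V(2; a₁, …, a_t; x) + V(-x) < 0`. -/
theorem stmt_13 (V : ℚ → ℚ) (hV : IsV2 V) (t : ℕ) (ht : 3 ≤ t)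
    (a : Fin t → ℕ) (hpos : ∀ j, 0 < a j) (hanti : StrictAnti a)
    (hcop : ∀ j k, j ≠ k → Nat.Coprime (2 ^ a j + 1) (2 ^ a k + 1)) :
    ∃ x : ℚ, Odd x.den ∧ Vmulti V a x + V (-x) < 0 := by
  let v : Fin t → ℕ := fun i => padicValNat 2 (a i)
  have hva : ∀ i, 2 ^ v i ∣ a i := fun i => pow_padicValNat_dvd
  have hdP : ∀ i, 2 ^ (2 ^ v i) + 1 ∣ 2 ^ a i + 1 := by
    intro i
    obtain ⟨c, hc⟩ := hva i
    have hodd : Odd c := by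
      rw [← Nat.not_even_iff_odd, even_iff_two_dvd]
      rintro ⟨e, rfl⟩
      have : 2 ^ (v i + 1) ∣ a i := ⟨e, by rw [hc]; ring⟩
      exact pow_succ_padicValNat_not_dvd (hpos i).ne' this
    rw [hc, pow_mul]
    simpa using hodd.nat_add_dvd_pow_add_pow (2 ^ 2 ^ v i) 1
  have hinj : Function.Injective v := by
    intro i j hij
    by_contra hne
    have h1 := hdP i
    have h2 := hdP j
    rw [← hij] at h2
    have h3 := Nat.dvd_gcd h1 h2
    rw [hcop i j hne] at h3
    have := Nat.le_of_dvd one_pos h3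
    have : 0 < 2 ^ 2 ^ v i := by positivity
    omega
  let K := 2 * ∏ i, a i
  have hset : Setup K (fun i => 2 ^ a i + 1) (fun i => 2 ^ (2 ^ v i) + 1) v := by
    refine ⟨hdP, hcop, ?_, ?_, ?_, ?_, ?_, ?_⟩
    · intro i
      have : 0 < 2 ^ 2 ^ v i := by positivity
      show 1 < 2 ^ 2 ^ v i + 1
      omega
    · intro i
      have : Even (2 ^ 2 ^ v i) := (Nat.even_pow.mpr ⟨even_two, by positivity⟩)
      exact this.add_one
    · intro i m him
      have := pow_low him (hva m)
      convert this using 1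
      push_cast; ring
    · intro i m him
      have := pow_low him (dvd_refl (2 ^ v m))
      convert this using 1
      push_cast; ring
    · intro i
      have h1 : 2 ^ (v i + 1) ∣ K := by
        rw [pow_succ, mul_comm]
        exact mul_dvd_mul (dvd_refl 2) ((hva i).trans (Finset.dvd_prod_of_mem a (Finset.mem_univ i)))
      exact pow_low (Nat.lt_succ_self _) h1
    · have : 0 < ∏ i, a i := Finset.prod_pos fun i _ => hpos i
      show 0 < 2 * ∏ i, a i
      omega
  -- the maximal index
  have : Nonempty (Fin t) := ⟨⟨0, by omega⟩⟩
  obtain ⟨m, -, hm⟩ := Finset.exists_max_image (Finset.univ : Finset (Fin t)) v Finset.univ_nonempty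
  have hcard : 2 ≤ (Finset.univ.erase m).card := by
    rw [Finset.card_erase_of_mem (Finset.mem_univ _), Finset.card_univ, Fintype.card_fin]; omega
  obtain ⟨x₀, hg₀, hn₀⟩ := exists_neg V hV hset hinj (Finset.univ.erase m) hcard
  obtain ⟨x, hg, hn⟩ := step hset (Finset.univ.erase m) m (Finset.notMem_erase _ _)
    (fun i hi => lt_of_le_of_ne (hm i (Finset.mem_univ _))
      (fun e => (Finset.ne_of_mem_erase hi) (hinj e))) hg₀ hn₀ 1
  rw [Finset.insert_erase (Finset.mem_univ m)] at hg hn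
  have hper := hset.ZZ_per _ hg.1
  have hPint : ZZ ((∏ j, ((2 : ℚ) ^ a j + 1)) * x) := by
    have := ZZ.of_dvd (n := ∏ j, ((2 ^ (2 ^ v j) + 1 : ℕ) : ℤ)) (m := ∏ j, ((2 ^ a j + 1 : ℕ) : ℤ))
      (x := x) (Finset.prod_dvd_prod_of_dvd _ _ fun j _ => by exact_mod_cast hdP j)
      (by have := hg.1; push_cast at this ⊢; exact this)
    push_cast at this; exact this
  have hSn : ∀ S : Finset (Fin t), S ≠ Finset.univ → ¬ ZZ ((∏ j ∈ S, ((2 : ℚ) ^ a j + 1)) * x) := by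
    intro S hS hz
    obtain ⟨i, hi⟩ : ∃ i, i ∉ S := by
      by_contra hcon; push Not at hcon
      exact hS (Finset.eq_univ_iff_forall.mpr hcon)
    apply hg.2 i (Finset.mem_univ _)
    have hsub : S ⊆ Finset.univ.erase i := fun j hj =>
      Finset.mem_erase.mpr ⟨fun e => hi (e ▸ hj), Finset.mem_univ _⟩
    have := (ZZ_prod (fun i => 2 ^ a i + 1) (Finset.univ.erase i \ S)).mul hz
    convert this using 1
    rw [← Finset.prod_sdiff hsub]
    push_cast; ring
  have hxn : ¬ ZZ x := by
    have := hSn ∅ (by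
      intro e
      exact Finset.univ_nonempty.ne_empty e.symm)
    simpa using this
  have hgneg : ¬ ZZ (-x) := by
    rintro ⟨z, hz⟩; exact hxn ⟨-z, by push_cast; linarith⟩
  have hVneg : V (-x) = - gg K x + 1 / 2 := by
    rw [V_eq V hV K hset.Kpos (-x) ?_ hgneg, gg_neg]
    obtain ⟨z, hz⟩ := hper
    exact ⟨-z, by push_cast; linarith⟩
  have hVS : ∀ S : Finset (Fin t), V ((∏ j ∈ S, ((2 : ℚ) ^ a j + 1)) * x)
      = gg K ((∏ j ∈ S, ((2 : ℚ) ^ a j + 1)) * x) + 1 / 2 - (if S = Finset.univ then 1 / 2 else 0) := by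
    intro S
    by_cases hS : S = Finset.univ
    · rw [if_pos hS, hS, gg_int K hPint]
      rw [hV _ 1 0 one_pos (by norm_num) (by
        obtain ⟨z, hz⟩ := hPint
        exact ⟨z, by rw [hz]; simp⟩)]
      simp
    · rw [if_neg hS, V_eq V hV K hset.Kpos _ ?_ (hSn S hS)]
      · ring
      · have := (ZZ_prod (fun i => 2 ^ a i + 1) S).mul hper
        convert this using 1; push_cast; ring
  refine ⟨x, ?_, ?_⟩
  · -- odd denominator
    obtain ⟨z, hz⟩ := hper
    have hdvd : (x.den : ℤ) ∣ 2 ^ K - 1 := by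
      have h1 : ((2 ^ K - 1 : ℤ) : ℚ) * x.num = z * x.den := by
        push_cast
        rw [← hz, mul_assoc, Rat.mul_den_eq_num]
      have h2 : (2 ^ K - 1 : ℤ) * x.num = z * x.den := by exact_mod_cast h1
      have h3 : IsCoprime (x.den : ℤ) x.num := by
        have := x.reduced
        rw [Int.isCoprime_iff_gcd_eq_one, Int.gcd_comm]
        simpa [Int.gcd, Nat.Coprime] using this
      exact h3.dvd_of_dvd_mul_right ⟨z, by rw [h2]; ring⟩
    have hoddK : Odd ((2 : ℤ) ^ K - 1) :=
      (Int.even_pow.mpr ⟨even_two, hset.Kpos.ne'⟩).sub_odd odd_one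
    rw [← Nat.not_even_iff_odd]
    intro hev
    have h4 : (2 : ℤ) ∣ x.den := by exact_mod_cast hev.two_dvd
    exact (Int.not_even_iff_odd.mpr hoddK) (even_iff_two_dvd.mpr (h4.trans hdvd))
  · have hsign : ∑ S : Finset (Fin t), (-1 : ℚ) ^ (t + S.card) = 0 := by
      have := Finset.sum_powerset_neg_one_pow_card_of_nonempty
        (x := (Finset.univ : Finset (Fin t))) Finset.univ_nonempty
      have h2 : ∑ S : Finset (Fin t), (-1 : ℚ) ^ S.card = 0 := by
        rw [Finset.powerset_univ] at this
        exact_mod_cast this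
      simp_rw [pow_add]
      rw [← Finset.mul_sum, h2, mul_zero]
    have hVm : Vmulti V a x = GG K (fun i => 2 ^ a i + 1) Finset.univ x - 1 / 2 := by
      unfold Vmulti GG
      rw [Finset.powerset_univ]
      have : ∀ S : Finset (Fin t), (-1 : ℚ) ^ (t - S.card) * V ((∏ j ∈ S, ((2 : ℚ) ^ a j + 1)) * x)
          = (-1 : ℚ) ^ ((Finset.univ : Finset (Fin t)).card + S.card)
              * gg K ((∏ j ∈ S, ((2 ^ a j + 1 : ℕ) : ℚ)) * x)
            + (-1 : ℚ) ^ (t + S.card) * (1 / 2)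
            - (if S = Finset.univ then 1 / 2 else 0) := by
        intro S
        have hc : S.card ≤ t := by simpa using Finset.card_le_univ S
        have hs : (-1 : ℚ) ^ (t - S.card) = (-1) ^ (t + S.card) := by
          rw [show t + S.card = (t - S.card) + 2 * S.card by omega, pow_add, pow_mul]; simp
        rw [hVS S, Finset.card_univ, Fintype.card_fin, hs]
        push_cast
        by_cases hS : S = Finset.univ
        · rw [if_pos hS]
          have : (-1 : ℚ) ^ (t + S.card) = 1 := by
            rw [hS, Finset.card_univ, Fintype.card_fin, ← two_mul, pow_mul]; simp
          rw [this]; ring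
        · rw [if_neg hS]; ring
      rw [Finset.sum_congr rfl fun S _ => this S, Finset.sum_sub_distrib, Finset.sum_add_distrib,
        ← Finset.sum_mul, hsign]
      simp
    rw [hVm, hVneg]
    linarith
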